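/- Let U ⊂ ℝ^{2n} carry an exact symplectic structure with action form a and matrix Ω(z) = Da(z)ᵀ − Da(z), let H : U → ℝ be a smooth Hamiltonian with flow φ_t, and let K : 𝕋^m → U be a smooth parameterization of an m-dimensional torus. Then the Calabi vector is invariant under the Hamiltonian flow: for every t for which φ_t ∘ K is defined, C(φ_t ∘ K) = C(K). -/

import Mathlib

/-!
Write `α = aᵀ dz` and `u s θ = φ s (K θ)`. The equation `Ω X = DHᵀ` says `i_X dα = -dH`, so the
Lie derivative of `α` along `X` is the exact form `d(α(X) - H)`. Hence the integrands of
`calabi a (φ T ∘ K)` and `calabi a K` should differ by `∂ᵢ P`, where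
`P θ = ∫₀ᵀ (α(X) - H)(u s θ) ds` is the primitive function of `φ T` along the torus. As `P` is
periodic, the integral of `∂ᵢ P` vanishes.

Differentiability of the flow in the initial condition is not among the hypotheses, and full
differentiability is not needed. Gronwall's inequality (`dist_trajectory_le`) makes `φ T ∘ K`
Lipschitz, so by Rademacher's theorem it is differentiable almost everywhere. Instead of
differentiating the variational equation, two trajectories are compared: along trajectories `γ, η`
the time derivative of `α(γ)(η - γ) - ∫ ((α(X) - H)(η) - (α(X) - H)(γ))` is `O(‖η - γ‖²)`
(`exists_quadratic_bound`, `primitive_estimate`). Taking `γ`, `η` through `K θ` and `K (θ + h v)`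
and dividing by `h`, the difference quotients of `P` converge almost everywhere to the difference
of the integrands. They are bounded and have integral zero (`ZPeriodic.integral_add_right`), and
dominated convergence concludes (`integral_invariant`). Negative times follow by replacing `H`
by `-H`.
-/

open Matrix MeasureTheory

noncomputable section

/-- Jacobian matrix of a map between finite-dimensional real coordinate spaces. -/
def jacobian {ι κ : Type*} [Fintype ι] [DecidableEq ι] [Fintype κ]
    (f : (ι → ℝ) → (κ → ℝ)) (x : ι → ℝ) : Matrix κ ι ℝ :=
  Matrix.of fun i j => fderiv ℝ f x (Pi.single j 1) i

/-- Row differential of a scalar function. -/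
def drow {ι : Type*} [Fintype ι] [DecidableEq ι]
    (f : (ι → ℝ) → ℝ) (x : ι → ℝ) : ι → ℝ :=
  fun j => fderiv ℝ f x (Pi.single j 1)

/-- A map on `ℝ^m` is `1`-periodic in each variable (i.e. descends to the torus `𝕋^m`). -/
def ZPeriodic {m : ℕ} {α : Type*} (f : (Fin m → ℝ) → α) : Prop :=
  ∀ (θ : Fin m → ℝ) (k : Fin m → ℤ), f (θ + fun i => (k i : ℝ)) = f θ

/-- The Calabi vector of a parameterization `K : 𝕋^m → ℝ^N` with respect to the
action form `a` : `C(K)ᵀ = ∫_{𝕋^m} a(K(θ))ᵀ DK(θ) dθ`. -/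
def calabi {N m : ℕ} (a : (Fin N → ℝ) → (Fin N → ℝ))
    (K : (Fin m → ℝ) → (Fin N → ℝ)) : Fin m → ℝ :=
  fun i => ∫ θ in Set.Icc (0 : Fin m → ℝ) 1, a (K θ) ⬝ᵥ (fun r => jacobian K θ r i)

open Set Filter Metric Topology
open scoped NNReal

/-! ### Uniform estimates near a compact set and continuity of the flow -/

lemma closedBall_subset_of_cthickening {E : Type*} [PseudoMetricSpace E] {U S : Set E} {δ : ℝ}
    (h : cthickening δ S ⊆ U)
    {z : E} (hz : z ∈ S) : closedBall z δ ⊆ U :=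
  (closedBall_subset_cthickening hz δ).trans h

section Tube

variable {E F : Type*} [NormedAddCommGroup E] [NormedSpace ℝ E] [NormedAddCommGroup F]
  [NormedSpace ℝ F]

lemma exists_lipschitzOnWith_closedBall [ProperSpace E] {U S : Set E} {δ : ℝ} {f : E → F}
    (hU : IsOpen U) (hf : ContDiffOn ℝ 1 f U) (hS : IsCompact S) (hSU : cthickening δ S ⊆ U) :
    ∃ L : ℝ≥0, ∀ z ∈ S, LipschitzOnWith L f (closedBall z δ) := by
  have hcont : ContinuousOn (fderiv ℝ f) (cthickening δ S) :=
    (hf.continuousOn_fderiv_of_isOpen hU le_rfl).mono hSU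
  obtain ⟨C, hC⟩ := (hS.cthickening (r := δ)).exists_bound_of_continuousOn hcont
  refine ⟨C.toNNReal, fun z hz => ?_⟩
  refine (convex_closedBall z δ).lipschitzOnWith_of_nnnorm_hasFDerivWithin_le
    (f' := fderiv ℝ f) (fun x hx => ?_) (fun x hx => ?_)
  · have hxU := closedBall_subset_of_cthickening hSU hz hx
    exact ((hf.differentiableOn one_ne_zero).differentiableAt
      (hU.mem_nhds hxU)).hasFDerivAt.hasFDerivWithinAt
  · have := hC x (closedBall_subset_cthickening hz δ hx)
    exact NNReal.coe_le_coe.1 (by simpa using this.trans (Real.le_coe_toNNReal C))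

/-- Second-order Taylor remainder, uniform along a compact set. -/
lemma exists_taylor_bound [ProperSpace E] {U S : Set E} {δ : ℝ} {f : E → F}
    (hU : IsOpen U) (hf : ContDiffOn ℝ 2 f U) (hS : IsCompact S) (hSU : cthickening δ S ⊆ U) :
    ∃ C : ℝ, 0 ≤ C ∧ ∀ z ∈ S, ∀ w ∈ closedBall z δ,
      ‖f w - f z - fderiv ℝ f z (w - z)‖ ≤ C * ‖w - z‖ ^ 2 := by
  have hf' : ContDiffOn ℝ 1 (fderiv ℝ f) U := hf.fderiv_of_isOpen hU (by norm_num)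
  obtain ⟨L, hL⟩ := exists_lipschitzOnWith_closedBall hU hf' hS hSU
  refine ⟨L, L.2, fun z hz w hw => ?_⟩
  have hw' : ‖w - z‖ ≤ δ := by simpa [dist_eq_norm] using hw
  have hsub : closedBall z ‖w - z‖ ⊆ closedBall z δ := closedBall_subset_closedBall hw'
  have hzδ : z ∈ closedBall z δ := mem_closedBall_self ((norm_nonneg _).trans hw')
  have := (convex_closedBall z ‖w - z‖).norm_image_sub_le_of_norm_hasFDerivWithin_le'
    (f := f) (f' := fderiv ℝ f) (φ := fderiv ℝ f z) (C := L * ‖w - z‖) (x := z) (y := w)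
    (fun x hx => ?_) (fun x hx => ?_) (mem_closedBall_self (norm_nonneg _))
    (by simp [dist_eq_norm])
  · linarith [this]
  · have hxU := closedBall_subset_of_cthickening hSU hz (hsub hx)
    exact ((hf.differentiableOn two_ne_zero).differentiableAt
      (hU.mem_nhds hxU)).hasFDerivAt.hasFDerivWithinAt
  · have h1 := (hL z hz).dist_le_mul x (hsub hx) z hzδ
    rw [dist_eq_norm] at h1
    exact h1.trans (mul_le_mul_of_nonneg_left hx L.2)

/-- Gronwall's estimate together with the continuation argument which shows that a trajectory
starting close enough to `γ` cannot leave the tube of radius `δ` around `γ` on `[0, T]`. -/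
lemma dist_trajectory_le {X : E → E} {γ η : ℝ → E} {T δ : ℝ} {L : ℝ≥0}
    (hX : ∀ s ∈ Icc 0 T, LipschitzOnWith L X (closedBall (γ s) δ))
    (hγ : ∀ s, HasDerivAt γ (X (γ s)) s) (hη : ∀ s, HasDerivAt η (X (η s)) s)
    (h0 : dist (η 0) (γ 0) * Real.exp (L * T) < δ) :
    ∀ s ∈ Icc 0 T, dist (η s) (γ s) ≤ dist (η 0) (γ 0) * Real.exp (L * T) := by
  have hγc : Continuous γ := continuous_iff_continuousAt.2 fun s => (hγ s).continuousAt
  have hηc : Continuous η := continuous_iff_continuousAt.2 fun s => (hη s).continuousAt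
  have hδ : 0 < δ := lt_of_le_of_lt (by positivity) h0
  have gron : ∀ r ∈ Icc 0 T, (∀ s ∈ Ico 0 r, dist (η s) (γ s) ≤ δ) →
      dist (η r) (γ r) ≤ dist (η 0) (γ 0) * Real.exp (L * T) := by
    intro r hr hs
    have := dist_le_of_trajectories_ODE_of_mem (v := fun _ => X) (K := L)
      (s := fun s => closedBall (γ s) δ) (f := η) (g := γ) (a := 0) (b := r)
      (fun t ht => hX t ⟨ht.1, ht.2.le.trans hr.2⟩) hηc.continuousOn
      (fun t _ => (hη t).hasDerivWithinAt) (fun t ht => hs t ht) hγc.continuousOn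
      (fun t _ => (hγ t).hasDerivWithinAt) (fun t _ => mem_closedBall_self hδ.le) le_rfl
      r ⟨hr.1, le_rfl⟩
    refine this.trans ?_
    gcongr
    linarith [hr.2]
  have key : ∀ s ∈ Icc 0 T, dist (η s) (γ s) < δ := by
    by_contra! hcon
    -- the first time at which the tube would be left
    set B : Set ℝ := Icc 0 T ∩ {s | δ ≤ dist (η s) (γ s)} with hB
    have hBc : IsCompact B :=
      isCompact_Icc.inter_right (isClosed_le continuous_const (hηc.dist hγc))
    obtain ⟨s₁, hs₁, hs₁'⟩ := hcon
    obtain ⟨r, hrB, hrmin⟩ := hBc.exists_isLeast ⟨s₁, hs₁, hs₁'⟩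
    refine absurd (gron r hrB.1 fun s hs => ?_) (not_le.2 (h0.trans_le hrB.2))
    by_contra! hlt
    exact absurd (hrmin ⟨⟨hs.1, hs.2.le.trans hrB.1.2⟩, hlt.le⟩) (not_le.2 hs.2)
  exact fun s hs => gron s hs fun r hr => (key r ⟨hr.1, hr.2.le.trans hs.2⟩).le

lemma continuousOn_flow [ProperSpace E] {U : Set E} (hU : IsOpen U) {X : E → E}
    (hX : ContDiffOn ℝ 1 X U) {φ : ℝ → E → E} (hφU : ∀ t, ∀ z ∈ U, φ t z ∈ U)
    (hφ0 : ∀ z ∈ U, φ 0 z = z) (hφ : ∀ z ∈ U, ∀ t, HasDerivAt (fun s => φ s z) (X (φ t z)) t)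
    (T : ℝ) : ContinuousOn (fun p : ℝ × E => φ p.1 p.2) (Icc 0 T ×ˢ U) := by
  rintro ⟨s₀, z₀⟩ ⟨hs₀, hz₀⟩
  have hc : Continuous fun s => φ s z₀ :=
    continuous_iff_continuousAt.2 fun s => (hφ z₀ hz₀ s).continuousAt
  have hO : IsCompact ((fun s => φ s z₀) '' Icc 0 T) := isCompact_Icc.image hc
  obtain ⟨δ, hδ, hδU⟩ := hO.exists_cthickening_subset_open hU
    (by rintro _ ⟨s, -, rfl⟩; exact hφU s z₀ hz₀)
  obtain ⟨L, hL⟩ := exists_lipschitzOnWith_closedBall hU hX hO hδU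
  set M := Real.exp (L * T)
  have hlim : Tendsto (fun p : ℝ × E => dist p.2 z₀ * M + dist (φ p.1 z₀) (φ s₀ z₀))
      (𝓝[Icc 0 T ×ˢ U] (s₀, z₀)) (𝓝 0) := by
    have : Continuous fun p : ℝ × E => dist p.2 z₀ * M + dist (φ p.1 z₀) (φ s₀ z₀) := by
      have := hc.comp (continuous_fst (X := ℝ) (Y := E))
      fun_prop
    have h := this.tendsto (s₀, z₀)
    simp only [dist_self, zero_mul, add_zero] at h
    exact h.mono_left nhdsWithin_le_nhds
  have hnear : ∀ᶠ p : ℝ × E in 𝓝[Icc 0 T ×ˢ U] (s₀, z₀), dist p.2 z₀ * M < δ := by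
    have : Continuous fun p : ℝ × E => dist p.2 z₀ * M := by fun_prop
    exact nhdsWithin_le_nhds ((this.tendsto (s₀, z₀)).eventually_lt_const (by simpa using hδ))
  refine tendsto_iff_dist_tendsto_zero.2 (squeeze_zero' (.of_forall fun _ => dist_nonneg) ?_ hlim)
  filter_upwards [hnear, self_mem_nhdsWithin] with p hp hpm
  refine (dist_triangle _ (φ p.1 z₀) _).trans (add_le_add_left ?_ _)
  have := dist_trajectory_le (γ := fun s => φ s z₀) (η := fun s => φ s p.2) (T := T)
    (fun s hs => hL _ ⟨s, hs, rfl⟩) (hφ z₀ hz₀) (hφ p.2 hpm.2)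
    (by simpa [hφ0 _ hz₀, hφ0 _ hpm.2] using hp) p.1 hpm.1
  simpa [hφ0 _ hz₀, hφ0 _ hpm.2] using this

end Tube

/-! ### The primitive function along pairs of trajectories -/

section Primitive

variable {E : Type*} [NormedAddCommGroup E] [NormedSpace ℝ E]

/-- The infinitesimal form of invariance. The hypothesis `hid` is `i_X dα = -dH`; it says that the
linear part in `w - z` of the expression below vanishes, so that the expression is
quadratically small. -/
lemma exists_quadratic_bound [ProperSpace E] {U S : Set E} {δ : ℝ} (hU : IsOpen U)
    {α : E → E →L[ℝ] ℝ} (hα : ContDiffOn ℝ 2 α U) {H : E → ℝ} (hH : ContDiffOn ℝ 2 H U)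
    {X : E → E} (hX : ContDiffOn ℝ 1 X U)
    (hid : ∀ z ∈ U, ∀ v, fderiv ℝ α z (X z) v - fderiv ℝ α z v (X z) + fderiv ℝ H z v = 0)
    (hS : IsCompact S) (hδ : 0 ≤ δ) (hSU : cthickening δ S ⊆ U) :
    ∃ C : ℝ, 0 ≤ C ∧ ∀ z ∈ S, ∀ w ∈ closedBall z δ,
      |fderiv ℝ α z (X z) (w - z) - (α w - α z) (X w) + (H w - H z)| ≤ C * ‖w - z‖ ^ 2 := by
  have hSU' : S ⊆ U := (self_subset_cthickening S).trans hSU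
  obtain ⟨Cα, hCα, hα'⟩ := exists_taylor_bound hU hα hS hSU
  obtain ⟨CH, hCH, hH'⟩ := exists_taylor_bound hU hH hS hSU
  obtain ⟨LX, hLX⟩ := exists_lipschitzOnWith_closedBall hU hX hS hSU
  obtain ⟨Lα, hLα⟩ := exists_lipschitzOnWith_closedBall hU (hα.of_le one_le_two) hS hSU
  obtain ⟨B, hB⟩ := hS.exists_bound_of_continuousOn (hX.continuousOn.mono hSU')
  refine ⟨Cα * |B| + Lα * LX + CH, by positivity, fun z hz w hw => ?_⟩
  have hzz : z ∈ closedBall z δ := mem_closedBall_self hδ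
  set d := ‖w - z‖ with hd
  have h1 : |(α w - α z - fderiv ℝ α z (w - z)) (X z)| ≤ Cα * |B| * d ^ 2 := by
    calc _ ≤ ‖α w - α z - fderiv ℝ α z (w - z)‖ * ‖X z‖ := ContinuousLinearMap.le_opNorm _ _
      _ ≤ (Cα * d ^ 2) * |B| := by
        gcongr
        · exact hα' z hz w hw
        · exact (hB z hz).trans (le_abs_self B)
      _ = _ := by ring
  have h2 : |(α w - α z) (X w - X z)| ≤ Lα * LX * d ^ 2 := by
    calc _ ≤ ‖α w - α z‖ * ‖X w - X z‖ := ContinuousLinearMap.le_opNorm _ _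
      _ ≤ (Lα * d) * (LX * d) := by
        gcongr
        · simpa [dist_eq_norm] using (hLα z hz).dist_le_mul w hw z hzz
        · simpa [dist_eq_norm] using (hLX z hz).dist_le_mul w hw z hzz
      _ = _ := by ring
  have h3 : |H w - H z - fderiv ℝ H z (w - z)| ≤ CH * d ^ 2 := hH' z hz w hw
  have hsplit : fderiv ℝ α z (X z) (w - z) - (α w - α z) (X w) + (H w - H z)
      = -((α w - α z - fderiv ℝ α z (w - z)) (X z)) - (α w - α z) (X w - X z)
        + (H w - H z - fderiv ℝ H z (w - z)) := by
    have := hid z (hSU' hz) (w - z)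
    simp only [_root_.map_sub, _root_.sub_apply] at this ⊢
    linarith
  rw [hsplit, abs_le]
  rw [abs_le] at h1 h2 h3
  constructor <;> nlinarith

/-- Comparison of two trajectories at distance at most `r`: the variation of `α(γ)(η - γ)` along
the flow is the difference of the values of the primitive function `∫ (α(X) - H)`, up to a
quadratic error. -/
lemma primitive_estimate {U : Set E} (hU : IsOpen U)
    {α : E → E →L[ℝ] ℝ} (hα : ContDiffOn ℝ 2 α U) {H : E → ℝ} (hH : ContDiffOn ℝ 2 H U)
    {X : E → E} (hX : ContDiffOn ℝ 1 X U) {γ η : ℝ → E} {T r C : ℝ} (hT : 0 ≤ T) (hC : 0 ≤ C)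
    (hγU : ∀ s, γ s ∈ U) (hηU : ∀ s, η s ∈ U)
    (hγ : ∀ s, HasDerivAt γ (X (γ s)) s) (hη : ∀ s, HasDerivAt η (X (η s)) s)
    (hr : ∀ s ∈ Icc 0 T, ‖η s - γ s‖ ≤ r)
    (hbound : ∀ s ∈ Icc 0 T, |fderiv ℝ α (γ s) (X (γ s)) (η s - γ s)
      - (α (η s) - α (γ s)) (X (η s)) + (H (η s) - H (γ s))| ≤ C * ‖η s - γ s‖ ^ 2) :
    |(α (γ T) (η T - γ T) - α (γ 0) (η 0 - γ 0))
      - ((∫ s in (0 : ℝ)..T, (α (η s) (X (η s)) - H (η s)))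
        - ∫ s in (0 : ℝ)..T, (α (γ s) (X (γ s)) - H (γ s)))| ≤ C * r ^ 2 * T := by
  have hQ : ContinuousOn (fun z => α z (X z) - H z) U :=
    (hα.continuousOn.clm_apply hX.continuousOn).sub hH.continuousOn
  have prim : ∀ ζ : ℝ → E, (∀ s, ζ s ∈ U) → (∀ s, HasDerivAt ζ (X (ζ s)) s) → ∀ t,
      HasDerivAt (fun t => ∫ s in (0 : ℝ)..t, (α (ζ s) (X (ζ s)) - H (ζ s)))
        (α (ζ t) (X (ζ t)) - H (ζ t)) t := by
    intro ζ hζU hζ t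
    have hζc : Continuous ζ := continuous_iff_continuousAt.2 fun s => (hζ s).continuousAt
    have hc : Continuous fun s => α (ζ s) (X (ζ s)) - H (ζ s) := hQ.comp_continuous hζc hζU
    exact intervalIntegral.integral_hasDerivAt_right (hc.intervalIntegrable _ _)
      (hc.stronglyMeasurableAtFilter _ _) hc.continuousAt
  have hpair : ∀ t, HasDerivAt (fun t => α (γ t) (η t - γ t))
      (fderiv ℝ α (γ t) (X (γ t)) (η t - γ t) + α (γ t) (X (η t) - X (γ t))) t := by
    intro t
    have hαd : HasFDerivAt α (fderiv ℝ α (γ t)) (γ t) :=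
      ((hα.differentiableOn two_ne_zero).differentiableAt (hU.mem_nhds (hγU t))).hasFDerivAt
    exact (hαd.comp_hasDerivAt t (hγ t)).clm_apply ((hη t).sub (hγ t))
  have hG := fun t => (hpair t).sub ((prim η hηU hη t).sub (prim γ hγU hγ t))
  have := norm_image_sub_le_of_norm_deriv_le_segment' (a := 0) (b := T) (C := C * r ^ 2)
    (fun t _ => (hG t).hasDerivWithinAt) (fun t ht => ?_) T ⟨hT, le_rfl⟩
  · simp only [Pi.sub_apply, intervalIntegral.integral_same, sub_zero, Real.norm_eq_abs] at this
    convert this using 2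
    ring
  · have ht' : t ∈ Icc 0 T := ⟨ht.1, ht.2.le⟩
    have h1 := hbound t ht'
    have h2 : C * ‖η t - γ t‖ ^ 2 ≤ C * r ^ 2 := by
      gcongr
      exact hr t ht'
    refine le_trans (le_of_eq ?_) (h1.trans h2)
    rw [Real.norm_eq_abs]
    congr 1
    simp only [_root_.map_sub, _root_.sub_apply]
    ring

end Primitive

/-! ### Periodic functions -/

section Periodic

open scoped Pointwise

lemma ZPeriodic.comp {m : ℕ} {β κ : Type*} {f : (Fin m → ℝ) → β} (hf : ZPeriodic f) (g : β → κ) :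
    ZPeriodic (fun θ => g (f θ)) := fun θ k => congrArg g (hf θ k)

lemma ZPeriodic.exists_mem_Icc {m : ℕ} {β : Type*} {f : (Fin m → ℝ) → β} (hf : ZPeriodic f)
    (θ : Fin m → ℝ) : ∃ θ' ∈ Icc (0 : Fin m → ℝ) 1, f θ' = f θ := by
  refine ⟨fun i => Int.fract (θ i), ⟨fun i => Int.fract_nonneg _, fun i => (Int.fract_lt_one _).le⟩,
    ?_⟩
  rw [← hf _ fun i => ⌊θ i⌋]
  congr 1
  ext i
  exact Int.fract_add_floor _

lemma ZPeriodic.exists_lipschitzWith {m : ℕ} {F : Type*} [NormedAddCommGroup F] [NormedSpace ℝ F]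
    {f : (Fin m → ℝ) → F} (hf : ZPeriodic f) (hf1 : ContDiff ℝ 1 f) :
    ∃ L : ℝ≥0, LipschitzWith L f := by
  have hper : ZPeriodic (fderiv ℝ f) := by
    intro θ k
    rw [← fderiv_comp_add_right]
    congr 1
    ext1 x
    exact hf x k
  obtain ⟨C, hC⟩ := (isCompact_Icc (a := (0 : Fin m → ℝ)) (b := 1)).exists_bound_of_continuousOn
    (hf1.continuous_fderiv one_ne_zero).continuousOn
  refine ⟨C.toNNReal, lipschitzWith_of_nnnorm_fderiv_le (hf1.differentiable one_ne_zero) fun θ => ?_⟩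
  obtain ⟨θ', hθ', h⟩ := hper.exists_mem_Icc θ
  rw [← h]
  exact NNReal.coe_le_coe.1 (by simpa using (hC θ' hθ').trans (Real.le_coe_toNNReal C))

/-- Translation invariance of the integral over the torus: the half-open unit cube and its
translates are fundamental domains for the lattice `ℤ^m`. -/
lemma ZPeriodic.integral_add_right {m : ℕ} {f : (Fin m → ℝ) → ℝ} (hf : ZPeriodic f)
    (v : Fin m → ℝ) :
    ∫ θ in Icc (0 : Fin m → ℝ) 1, f (θ + v) = ∫ θ in Icc (0 : Fin m → ℝ) 1, f θ := by
  set b := Pi.basisFun ℝ (Fin m)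
  have hD : (ZSpan.fundamentalDomain b) =ᵐ[volume] Icc (0 : Fin m → ℝ) 1 := by
    rw [ZSpan.fundamentalDomain_pi_basisFun]
    exact Measure.univ_pi_Ico_ae_eq_Icc (f := (0 : Fin m → ℝ)) (g := 1)
  rw [← setIntegral_congr_set hD, ← setIntegral_congr_set hD]
  have h1 := ZSpan.isAddFundamentalDomain' b (volume : Measure (Fin m → ℝ))
  have h2 := h1.vadd_of_comm v
  have hinv : ∀ (g : (Submodule.span ℤ (range b)).toAddSubgroup) (x : Fin m → ℝ), f (g +ᵥ x) = f x := by
    rintro ⟨g, hg⟩ x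
    obtain ⟨k, rfl⟩ : ∃ k : Fin m → ℤ, (fun i => (k i : ℝ)) = g := by
      have := (b.mem_span_iff_repr_mem ℤ g).1 hg
      choose k hk using this
      refine ⟨k, funext fun i => ?_⟩
      simpa [b] using hk i
    have := hf x k
    rw [add_comm] at this
    exact this
  have : Countable (Submodule.span ℤ (range b)).toAddSubgroup :=
    inferInstanceAs (Countable (Submodule.span ℤ (range b)))
  rw [h1.setIntegral_eq h2 hinv]
  have := (measurePreserving_add_right (volume : Measure (Fin m → ℝ)) v).setIntegral_preimage_emb
    (measurableEmbedding_addRight v) f (v +ᵥ ZSpan.fundamentalDomain b)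
  rw [← this]
  congr 2
  ext x
  simp [Set.mem_vadd_set_iff_neg_vadd_mem]

end Periodic

/-! ### Invariance for 1-forms and nonnegative times -/

section Torus

/-- Invariance of `∫ α(K) DK v` over the torus under the flow for nonnegative times, where
`α` is a 1-form with `i_X dα = -dH`. The map `φ T ∘ K` is shown to be Lipschitz, hence
differentiable almost everywhere, and the integrands differ by the derivative of a periodic
function in the direction `v`. -/
lemma integral_invariant {m : ℕ} {E : Type*} [NormedAddCommGroup E] [NormedSpace ℝ E]
    [FiniteDimensional ℝ E] {U : Set E} (hU : IsOpen U)
    {α : E → E →L[ℝ] ℝ} (hα : ContDiffOn ℝ 2 α U) {H : E → ℝ} (hH : ContDiffOn ℝ 2 H U)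
    {X : E → E} (hX : ContDiffOn ℝ 1 X U)
    (hid : ∀ z ∈ U, ∀ v, fderiv ℝ α z (X z) v - fderiv ℝ α z v (X z) + fderiv ℝ H z v = 0)
    {φ : ℝ → E → E} (hφU : ∀ t, ∀ z ∈ U, φ t z ∈ U) (hφ0 : ∀ z ∈ U, φ 0 z = z)
    (hφ : ∀ z ∈ U, ∀ t, HasDerivAt (fun s => φ s z) (X (φ t z)) t)
    {K : (Fin m → ℝ) → E} (hK : ContDiff ℝ 1 K) (hKper : ZPeriodic K) (hKU : ∀ θ, K θ ∈ U)
    {T : ℝ} (hT : 0 ≤ T) (v : Fin m → ℝ) :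
    ∫ θ in Icc (0 : Fin m → ℝ) 1, α (φ T (K θ)) (fderiv ℝ (fun θ => φ T (K θ)) θ v)
      = ∫ θ in Icc (0 : Fin m → ℝ) 1, α (K θ) (fderiv ℝ K θ v) := by
  have : ProperSpace E := FiniteDimensional.proper ℝ E
  obtain ⟨LK, hLK⟩ := hKper.exists_lipschitzWith hK
  -- the compact set swept out by the torus
  set S : Set E := (fun p : ℝ × (Fin m → ℝ) => φ p.1 (K p.2)) '' (Icc 0 T ×ˢ Icc 0 1) with hSdef
  have hS : IsCompact S := by
    refine (isCompact_Icc.prod isCompact_Icc).image_of_continuousOn ?_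
    have h := continuousOn_flow hU hX hφU hφ0 hφ T
    exact h.comp (f := fun p : ℝ × (Fin m → ℝ) => (p.1, K p.2))
      (continuous_fst.prodMk (hK.continuous.comp continuous_snd)).continuousOn
      fun p hp => ⟨hp.1, hKU _⟩
  have hSmem : ∀ s ∈ Icc 0 T, ∀ θ, φ s (K θ) ∈ S := by
    intro s hs θ
    obtain ⟨θ', hθ', h⟩ := hKper.exists_mem_Icc θ
    exact ⟨(s, θ'), ⟨hs, hθ'⟩, by simp [h]⟩
  have hSU : S ⊆ U := by
    rintro _ ⟨p, -, rfl⟩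
    exact hφU _ _ (hKU _)
  obtain ⟨δ, hδ, hδU⟩ := hS.exists_cthickening_subset_open hU hSU
  obtain ⟨L, hL⟩ := exists_lipschitzOnWith_closedBall hU hX hS hδU
  obtain ⟨C, hC, hquad⟩ := exists_quadratic_bound hU hα hH hX hid hS hδ.le hδU
  obtain ⟨B₀, hB₀⟩ := hS.exists_bound_of_continuousOn (hα.continuousOn.mono hSU)
  set B := |B₀|
  have hB : ∀ z ∈ S, ‖α z‖ ≤ B := fun z hz => (hB₀ z hz).trans (le_abs_self _)
  have h0T : (0 : ℝ) ∈ Icc 0 T := ⟨le_rfl, hT⟩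
  have hTT : T ∈ Icc 0 T := ⟨hT, le_rfl⟩
  set A : ℝ := LK * Real.exp (L * T) with hA
  have hA0 : 0 ≤ A := by positivity
  have hclose : ∀ θ θ', A * dist θ' θ < δ → ∀ s ∈ Icc 0 T,
      ‖φ s (K θ') - φ s (K θ)‖ ≤ A * dist θ' θ := by
    intro θ θ' hd s hs
    have hKd : dist (K θ') (K θ) * Real.exp (L * T) ≤ A * dist θ' θ := by
      calc _ ≤ (LK * dist θ' θ) * Real.exp (L * T) := by
            gcongr
            exact hLK.dist_le_mul _ _
        _ = _ := by rw [hA]; ring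
    have := dist_trajectory_le (γ := fun s => φ s (K θ)) (η := fun s => φ s (K θ')) (T := T)
      (fun s hs => hL _ (hSmem s hs θ)) (hφ _ (hKU θ)) (hφ _ (hKU θ'))
      (by simpa only [hφ0 _ (hKU _)] using hKd.trans_lt hd) s hs
    simp only [hφ0 _ (hKU _)] at this
    rw [← dist_eq_norm]
    exact this.trans hKd
  -- pairs of points at distance bounded below are handled by the diameter of `S`
  obtain ⟨M, hM⟩ : ∃ M : ℝ≥0, LipschitzWith M fun θ => φ T (K θ) := by
    refine ⟨(A + diam S / δ * A).toNNReal, LipschitzWith.of_dist_le_mul fun θ' θ => ?_⟩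
    have hdiam : 0 ≤ diam S / δ := div_nonneg diam_nonneg hδ.le
    rw [Real.coe_toNNReal _ (by positivity)]
    have hd0 : 0 ≤ dist θ' θ := dist_nonneg
    by_cases hd : A * dist θ' θ < δ
    · rw [dist_eq_norm (φ T _)]
      refine (hclose θ θ' hd T hTT).trans ?_
      gcongr
      nlinarith [mul_nonneg hdiam hA0]
    · calc dist (φ T (K θ')) (φ T (K θ)) ≤ diam S :=
            dist_le_diam_of_mem hS.isBounded (hSmem T hTT _) (hSmem T hTT _)
        _ = diam S / δ * δ := by field_simp
        _ ≤ diam S / δ * (A * dist θ' θ) := by gcongr; exact not_lt.1 hd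
        _ ≤ _ := by nlinarith [mul_nonneg hA0 hd0]
  set P : (Fin m → ℝ) → ℝ := fun θ =>
    ∫ s in (0 : ℝ)..T, (α (φ s (K θ)) (X (φ s (K θ))) - H (φ s (K θ))) with hP
  have hPper : ZPeriodic P :=
    hKper.comp fun z => ∫ s in (0 : ℝ)..T, (α (φ s z) (X (φ s z)) - H (φ s z))
  have hest : ∀ θ θ', A * dist θ' θ < δ →
      |(α (φ T (K θ)) (φ T (K θ') - φ T (K θ)) - α (K θ) (K θ' - K θ)) - (P θ' - P θ)|
        ≤ C * (A * dist θ' θ) ^ 2 * T := by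
    intro θ θ' hd
    have hr := hclose θ θ' hd
    have := primitive_estimate hU hα hH hX (γ := fun s => φ s (K θ)) (η := fun s => φ s (K θ'))
      hT hC (fun s => hφU s _ (hKU θ)) (fun s => hφU s _ (hKU θ')) (hφ _ (hKU θ)) (hφ _ (hKU θ'))
      hr (fun s hs => hquad _ (hSmem s hs θ) _
        (by simpa [dist_eq_norm] using (hr s hs).trans hd.le))
    simpa only [hφ0 _ (hKU _)] using this
  set R : ℝ := 2 * B * A + C * δ * A * T with hR
  have hR0 : 0 ≤ R := by positivity
  have hPlip : ∀ θ θ', A * dist θ' θ < δ → |P θ' - P θ| ≤ R * dist θ' θ := by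
    intro θ θ' hd
    have h1 := hest θ θ' hd
    have hα1 : |α (φ T (K θ)) (φ T (K θ') - φ T (K θ))| ≤ B * (A * dist θ' θ) :=
      (ContinuousLinearMap.le_opNorm _ _).trans (mul_le_mul (hB _ (hSmem T hTT θ))
        (hclose θ θ' hd T hTT) (norm_nonneg _) (abs_nonneg _))
    have hα2 : |α (K θ) (K θ' - K θ)| ≤ B * (A * dist θ' θ) := by
      have h2 := hclose θ θ' hd 0 h0T
      have h3 := hSmem 0 h0T θ
      simp only [hφ0 _ (hKU _)] at h2 h3
      exact (ContinuousLinearMap.le_opNorm _ _).trans (mul_le_mul (hB _ h3)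
        h2 (norm_nonneg _) (abs_nonneg _))
    have h4 : C * (A * dist θ' θ) ^ 2 * T ≤ C * δ * A * T * dist θ' θ := by
      calc C * (A * dist θ' θ) ^ 2 * T = C * (A * dist θ' θ) * (A * dist θ' θ) * T := by ring
        _ ≤ C * δ * (A * dist θ' θ) * T := by gcongr
        _ = _ := by ring
    rw [abs_le] at *
    constructor <;> nlinarith
  have hsmall : ∀ θ₀ : Fin m → ℝ, ∀ᶠ θ in 𝓝 θ₀, A * dist θ θ₀ < δ := fun θ₀ => by
    have : Continuous fun θ => A * dist θ θ₀ := by fun_prop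
    exact (this.tendsto θ₀).eventually_lt_const (by simpa using hδ)
  have hPcont : Continuous P := by
    refine continuous_iff_continuousAt.2 fun θ₀ => tendsto_iff_dist_tendsto_zero.2 ?_
    have hlim : Tendsto (fun θ => R * dist θ θ₀) (𝓝 θ₀) (𝓝 0) := by
      have : Continuous fun θ => R * dist θ θ₀ := by fun_prop
      simpa using this.tendsto θ₀
    refine squeeze_zero' (.of_forall fun _ => dist_nonneg) ?_ hlim
    filter_upwards [hsmall θ₀] with θ hθ
    exact hPlip θ₀ θ hθ
  set Q : ℝ → (Fin m → ℝ) → ℝ := fun h θ => h⁻¹ • (P (θ + h • v) - P θ) with hQ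
  set f : (Fin m → ℝ) → ℝ := fun θ => α (φ T (K θ)) (fderiv ℝ (fun θ => φ T (K θ)) θ v) with hf
  set g : (Fin m → ℝ) → ℝ := fun θ => α (K θ) (fderiv ℝ K θ v) with hg
  have hdist : ∀ (h : ℝ) (θ : Fin m → ℝ), dist (θ + h • v) θ = |h| * ‖v‖ := fun h θ => by
    simp [dist_eq_norm, norm_smul]
  have hh : ∀ᶠ h : ℝ in 𝓝[≠] 0, A * (|h| * ‖v‖) < δ := by
    have : Continuous fun h : ℝ => A * (|h| * ‖v‖) := by fun_prop
    exact nhdsWithin_le_nhds ((this.tendsto 0).eventually_lt_const (by simpa using hδ))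
  have hlim : ∀ᵐ θ, Tendsto (fun h => Q h θ) (𝓝[≠] 0) (𝓝 (f θ - g θ)) := by
    filter_upwards [hM.ae_differentiableAt (μ := volume)] with θ hθ
    have h1 := ((α (φ T (K θ))).continuous.tendsto _).comp
      (hθ.hasFDerivAt.hasLineDerivAt v).tendsto_slope_zero
    have h2 := ((α (K θ)).continuous.tendsto _).comp
      ((hK.differentiable one_ne_zero θ).hasFDerivAt.hasLineDerivAt v).tendsto_slope_zero
    refine (h1.sub h2).congr_dist ?_
    have hlim : Tendsto (fun h : ℝ => C * A ^ 2 * ‖v‖ ^ 2 * T * |h|) (𝓝[≠] 0) (𝓝 0) := by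
      have : Continuous fun h : ℝ => C * A ^ 2 * ‖v‖ ^ 2 * T * |h| := by fun_prop
      have h0 := this.tendsto 0
      simp only [abs_zero, mul_zero] at h0
      exact h0.mono_left nhdsWithin_le_nhds
    refine squeeze_zero' (.of_forall fun _ => dist_nonneg) ?_ hlim
    filter_upwards [hh, self_mem_nhdsWithin] with h hhδ hne
    have hne' : |h| ≠ 0 := abs_ne_zero.2 hne
    have h3 := hest θ (θ + h • v) (by rwa [hdist])
    rw [hdist] at h3
    rw [Real.dist_eq]
    simp only [Function.comp_apply, hQ, map_smul, smul_eq_mul, ← mul_sub, abs_mul, abs_inv]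
    calc _ ≤ |h|⁻¹ * (C * (A * (|h| * ‖v‖)) ^ 2 * T) := by gcongr
      _ = _ := by field_simp
  have hQmeas : ∀ h, AEStronglyMeasurable (Q h) (volume.restrict (Icc (0 : Fin m → ℝ) 1)) :=
    fun h => by
      have : Continuous (Q h) := by fun_prop
      exact this.aestronglyMeasurable
  have hQbound : ∀ᶠ h in 𝓝[≠] (0 : ℝ), ∀ θ, ‖Q h θ‖ ≤ R * ‖v‖ := by
    filter_upwards [hh, self_mem_nhdsWithin] with h hhδ hne θ
    have hne' : |h| ≠ 0 := abs_ne_zero.2 hne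
    have h3 := hPlip θ (θ + h • v) (by rwa [hdist])
    rw [hdist] at h3
    simp only [hQ, norm_smul, norm_inv, Real.norm_eq_abs]
    calc _ ≤ |h|⁻¹ * (R * (|h| * ‖v‖)) := by gcongr
      _ = _ := by field_simp
  have hQint : ∀ h, ∫ θ in Icc (0 : Fin m → ℝ) 1, Q h θ = 0 := by
    intro h
    have hi : ∀ w : Fin m → ℝ, IntegrableOn (fun θ => P (θ + w)) (Icc (0 : Fin m → ℝ) 1) :=
      fun w => (by fun_prop : Continuous fun θ => P (θ + w)).continuousOn.integrableOn_compact
        isCompact_Icc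
    have hi0 : IntegrableOn P (Icc (0 : Fin m → ℝ) 1) :=
      hPcont.continuousOn.integrableOn_compact isCompact_Icc
    simp only [hQ]
    rw [integral_smul, integral_sub (hi _) hi0, hPper.integral_add_right, sub_self,
      smul_zero]
  have hconst : Integrable (fun _ => R * ‖v‖) (volume.restrict (Icc (0 : Fin m → ℝ) 1)) :=
    continuous_const.continuousOn.integrableOn_compact isCompact_Icc
  have hlim' := ae_restrict_of_ae (s := Icc (0 : Fin m → ℝ) 1) hlim
  have hzero : ∫ θ in Icc (0 : Fin m → ℝ) 1, (f θ - g θ) = 0 := by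
    have := tendsto_integral_filter_of_dominated_convergence _ (.of_forall hQmeas)
      (hQbound.mono fun h hb => .of_forall hb) hconst hlim'
    simp only [hQint] at this
    exact tendsto_nhds_unique this tendsto_const_nhds
  have hfg : IntegrableOn (fun θ => f θ - g θ) (Icc (0 : Fin m → ℝ) 1) := by
    refine hconst.mono' (aestronglyMeasurable_of_tendsto_ae (𝓝[≠] (0 : ℝ)) hQmeas hlim') ?_
    filter_upwards [hlim'] with θ hθ
    exact le_of_tendsto hθ.norm (hQbound.mono fun h hb => hb θ)
  have hgi : IntegrableOn g (Icc (0 : Fin m → ℝ) 1) := by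
    have : Continuous g :=
      (hα.continuousOn.comp_continuous hK.continuous hKU).clm_apply
        ((hK.continuous_fderiv one_ne_zero).clm_apply continuous_const)
    exact this.continuousOn.integrableOn_compact isCompact_Icc
  have hadd := integral_add hfg hgi
  simp only [sub_add_cancel, hzero, zero_add] at hadd
  exact hadd

end Torus

/-! ### Translation to coordinates and matrices -/

section Coordinates

/-- The dot product as a bundled bilinear map; it turns the action form `a`
into the 1-form `z ↦ a(z)ᵀ dz`. -/
def dotCLM (N : ℕ) : (Fin N → ℝ) →L[ℝ] (Fin N → ℝ) →L[ℝ] ℝ :=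
  ∑ i, (ContinuousLinearMap.proj (R := ℝ) (φ := fun _ : Fin N => ℝ) i).smulRight
    (ContinuousLinearMap.proj (R := ℝ) (φ := fun _ : Fin N => ℝ) i)

lemma dotCLM_apply {N : ℕ} (x y : Fin N → ℝ) : dotCLM N x y = x ⬝ᵥ y := by
  simp [dotCLM, dotProduct]

lemma jacobian_mulVec {ι κ : Type*} [Fintype ι] [DecidableEq ι] [Fintype κ]
    (f : (ι → ℝ) → (κ → ℝ)) (x v : ι → ℝ) : jacobian f x *ᵥ v = fderiv ℝ f x v := by
  ext i
  conv_rhs => rw [pi_eq_sum_univ' v]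
  simp [jacobian, Matrix.mulVec, dotProduct, mul_comm]

lemma drow_dotProduct {ι : Type*} [Fintype ι] [DecidableEq ι]
    (f : (ι → ℝ) → ℝ) (x v : ι → ℝ) : drow f x ⬝ᵥ v = fderiv ℝ f x v := by
  conv_rhs => rw [pi_eq_sum_univ' v]
  simp [drow, dotProduct, mul_comm]

lemma calabi_apply {N m : ℕ} (a : (Fin N → ℝ) → (Fin N → ℝ)) (K : (Fin m → ℝ) → (Fin N → ℝ))
    (i : Fin m) : calabi a K i = ∫ θ in Set.Icc (0 : Fin m → ℝ) 1,
      dotCLM N (a (K θ)) (fderiv ℝ K θ (Pi.single i 1)) := by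
  simp only [calabi, dotCLM_apply]
  rfl

variable {E : Type*} [NormedAddCommGroup E] [NormedSpace ℝ E] {ι : Type*} [Fintype ι]
  [DecidableEq ι] {U : Set E}

lemma contDiffOn_matrix_det {M : E → Matrix ι ι ℝ}
    (hM : ∀ i j, ContDiffOn ℝ 1 (fun z => M z i j) U) : ContDiffOn ℝ 1 (fun z => (M z).det) U := by
  simp only [Matrix.det_apply]
  exact ContDiffOn.sum fun σ _ => (contDiffOn_prod fun i _ => hM _ _).const_smul _

lemma contDiffOn_matrix_inv {M : E → Matrix ι ι ℝ}
    (hM : ∀ i j, ContDiffOn ℝ 1 (fun z => M z i j) U) (hinv : ∀ z ∈ U, IsUnit (M z)) (i j : ι) :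
    ContDiffOn ℝ 1 (fun z => (M z)⁻¹ i j) U := by
  simp only [Matrix.inv_def, Matrix.smul_apply, Ring.inverse_eq_inv', smul_eq_mul,
    Matrix.adjugate_apply]
  refine ((contDiffOn_matrix_det hM).inv fun z hz =>
    ((Matrix.isUnit_iff_isUnit_det _).1 (hinv z hz)).ne_zero).mul (contDiffOn_matrix_det ?_)
  intro k l
  by_cases hk : k = j
  · subst hk
    simpa using contDiffOn_const
  · simpa [Matrix.updateRow_ne hk] using hM k l

end Coordinates

/-- The Calabi vector of a parameterized torus is invariant under
the Hamiltonian flow of an exact symplectic structure: `C(φ_t ∘ K) = C(K)`. -/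
theorem calabi_invariant_under_hamiltonian_flow
    (n m : ℕ) (U : Set (Fin (2 * n) → ℝ)) (hU : IsOpen U)
    -- the action form and the exact symplectic structure
    (a : (Fin (2 * n) → ℝ) → (Fin (2 * n) → ℝ))
    (ha : ContDiffOn ℝ (⊤ : ℕ∞) a U)
    (Ω : (Fin (2 * n) → ℝ) → Matrix (Fin (2 * n)) (Fin (2 * n)) ℝ)
    (hΩ : ∀ z, Ω z = (jacobian a z)ᵀ - jacobian a z)
    (hΩinv : ∀ z ∈ U, IsUnit (Ω z))
    -- the Hamiltonian and its vector field
    (H : (Fin (2 * n) → ℝ) → ℝ) (hH : ContDiffOn ℝ (⊤ : ℕ∞) H U)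
    (X : (Fin (2 * n) → ℝ) → (Fin (2 * n) → ℝ))
    (hX : ∀ z, X z = (Ω z)⁻¹ *ᵥ drow H z)
    -- the flow of the Hamiltonian vector field, assumed defined for all times on U
    (φ : ℝ → (Fin (2 * n) → ℝ) → (Fin (2 * n) → ℝ))
    (hφU : ∀ (t : ℝ), ∀ z ∈ U, φ t z ∈ U)
    (hφ0 : ∀ z ∈ U, φ 0 z = z)
    (hφode : ∀ z ∈ U, ∀ t : ℝ, HasDerivAt (fun s => φ s z) (X (φ t z)) t)
    -- a smooth parameterization of an `m`-dimensional torus inside U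
    (K : (Fin m → ℝ) → (Fin (2 * n) → ℝ))
    (hK : ContDiff ℝ (⊤ : ℕ∞) K) (hKper : ZPeriodic K)
    (hKU : ∀ θ, K θ ∈ U) :
    ∀ t : ℝ, calabi a (fun θ => φ t (K θ)) = calabi a K := by
  have hjac : ∀ z v, jacobian a z *ᵥ v = fderiv ℝ a z v := jacobian_mulVec a
  have hmem : ∀ z ∈ U, DifferentiableAt ℝ a z := fun z hz =>
    (ha.differentiableOn (by simp)).differentiableAt (hU.mem_nhds hz)
  have ha2 : ContDiffOn ℝ 2 a U := contDiffOn_infty.1 ha 2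
  have hα : ContDiffOn ℝ 2 (fun z => dotCLM _ (a z)) U :=
    (dotCLM _).contDiff.comp_contDiffOn ha2
  have hH2 : ContDiffOn ℝ 2 H U := contDiffOn_infty.1 hH 2
  have hX1 : ContDiffOn ℝ 1 X U := by
    have hda : ContDiffOn ℝ 1 (fderiv ℝ a) U :=
      ha2.fderiv_of_isOpen hU (by norm_num)
    have hdH : ContDiffOn ℝ 1 (fderiv ℝ H) U := hH2.fderiv_of_isOpen hU (by norm_num)
    have hj : ∀ i j, ContDiffOn ℝ 1 (fun z => jacobian a z i j) U := fun i j =>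
      contDiffOn_pi.1 (hda.clm_apply contDiffOn_const) i
    have hΩ1 : ∀ i j, ContDiffOn ℝ 1 (fun z => Ω z i j) U := fun i j => by
      simp only [hΩ, Matrix.sub_apply, Matrix.transpose_apply]
      exact (hj j i).sub (hj i j)
    refine contDiffOn_pi.2 fun i => ?_
    simp only [hX, Matrix.mulVec, dotProduct]
    exact ContDiffOn.sum fun j _ => (contDiffOn_matrix_inv hΩ1 hΩinv i j).mul
      (hdH.clm_apply contDiffOn_const)
  -- `Ω X = DHᵀ`, rewritten as `i_X dα = -dH` for the 1-form `α z = a(z)ᵀ dz`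
  have hid : ∀ z ∈ U, ∀ v, fderiv ℝ (fun z => dotCLM _ (a z)) z (X z) v
      - fderiv ℝ (fun z => dotCLM _ (a z)) z v (X z) + fderiv ℝ H z v = 0 := by
    intro z hz v
    have hd : fderiv ℝ (fun z => dotCLM (2 * n) (a z)) z = (dotCLM _).comp (fderiv ℝ a z) :=
      ((dotCLM _).hasFDerivAt.comp z (hmem z hz).hasFDerivAt).fderiv
    have hΩX : Ω z *ᵥ X z = drow H z := by
      rw [hX, Matrix.mulVec_mulVec, Matrix.mul_nonsing_inv _
        ((Matrix.isUnit_iff_isUnit_det _).1 (hΩinv z hz)), Matrix.one_mulVec]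
    have hΩv : (Ω z *ᵥ X z) ⬝ᵥ v = X z ⬝ᵥ fderiv ℝ a z v - fderiv ℝ a z (X z) ⬝ᵥ v := by
      rw [hΩ, Matrix.sub_mulVec, sub_dotProduct, Matrix.mulVec_transpose,
        ← Matrix.dotProduct_mulVec, hjac, hjac]
    rw [hd, ← drow_dotProduct, ← hΩX, hΩv]
    simp only [ContinuousLinearMap.comp_apply, dotCLM_apply]
    rw [dotProduct_comm (fderiv ℝ a z v)]
    ring
  have hK1 : ContDiff ℝ 1 K := hK.of_le (by exact_mod_cast le_top)
  intro t
  ext i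
  simp only [calabi_apply]
  rcases le_total 0 t with ht | ht
  · exact integral_invariant hU hα hH2 hX1 hid hφU hφ0 hφode hK1 hKper hKU ht _
  · -- for negative times, reverse time and replace `H` by `-H`
    have := integral_invariant hU hα hH2.neg hX1.neg (φ := fun s => φ (-s))
      (fun z hz v => by
        have := hid z hz v
        rw [fderiv_fun_neg]
        simp only [_root_.map_neg, _root_.neg_apply]
        linarith)
      (fun s => hφU (-s)) (by simpa using hφ0)
      (fun z hz s => by
        have := (hφode z hz (-s)).scomp s (hasDerivAt_neg s)
        rwa [neg_one_smul] at this)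
      hK1 hKper hKU (neg_nonneg.2 ht) (Pi.single i 1)
    simpa only [neg_neg] using this
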